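/- There exists an instance of the information-acquisition game (a number of agents n, finite action sets B_i with costs c_i, finite signal sets S_i, a finite state set Θ with prior p, joint distributions P(·,·|b) whose agent-wise signal marginals depend only on that agent's own action, a principal action set A, a utility u, and a payment bound M) in which no uncorrelated mechanism is optimal: for every uncorrelated mechanism (γ, π), U°(γ, π) is strictly less than the maximum of U(μ, γ', π') over all incentive compatible correlated mechanisms (μ, γ', π'). -/

import Mathlib

open Finset

noncomputable section

variable {n : ℕ} {B S : Fin n → Type*} {Θ A : Type*}

/-- Expected payment of agent `i` under truthful behavior. -/
def Fpay [∀ i, Fintype (B i)] [∀ i, Fintype (S i)] [Fintype Θ]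
    (P : (∀ i, B i) → (∀ i, S i) → Θ → ℝ) (μ : (∀ i, B i) → ℝ)
    (γ : Fin n → (∀ i, B i) → (∀ i, S i) → Θ → ℝ) (i : Fin n) : ℝ :=
  ∑ b, ∑ s, ∑ θ, μ b * P b s θ * γ i b s θ

/-- Expected payment of agent `i` deviating via `(φ, ψ)` while the others are truthful. -/
def FpayDev [∀ i, Fintype (B i)] [∀ i, Fintype (S i)] [Fintype Θ]
    (P : (∀ i, B i) → (∀ i, S i) → Θ → ℝ) (μ : (∀ i, B i) → ℝ)
    (γ : Fin n → (∀ i, B i) → (∀ i, S i) → Θ → ℝ) (i : Fin n)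
    (φ : B i → B i) (ψ : B i → S i → S i) : ℝ :=
  ∑ b, ∑ s, ∑ θ, μ b * P (Function.update b i (φ (b i))) s θ *
      γ i b (Function.update s i (ψ (b i) (s i))) θ

/-- Incentive compatibility of a correlated mechanism. -/
def IC [∀ i, Fintype (B i)] [∀ i, Fintype (S i)] [Fintype Θ]
    (c : ∀ i, B i → ℝ) (P : (∀ i, B i) → (∀ i, S i) → Θ → ℝ)
    (μ : (∀ i, B i) → ℝ)
    (γ : Fin n → (∀ i, B i) → (∀ i, S i) → Θ → ℝ) : Prop :=
  ∀ (i : Fin n) (φ : B i → B i) (ψ : B i → S i → S i),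
    Fpay P μ γ i - FpayDev P μ γ i φ ψ ≥ ∑ b, μ b * (c i (b i) - c i (φ (b i)))

/-- Principal's expected utility of a correlated mechanism. -/
def Util [∀ i, Fintype (B i)] [∀ i, Fintype (S i)] [Fintype Θ] [Fintype A]
    (P : (∀ i, B i) → (∀ i, S i) → Θ → ℝ) (u : A → Θ → ℝ)
    (μ : (∀ i, B i) → ℝ)
    (γ : Fin n → (∀ i, B i) → (∀ i, S i) → Θ → ℝ)
    (π : (∀ i, B i) → (∀ i, S i) → A → ℝ) : ℝ :=
  (∑ b, ∑ s, ∑ θ, μ b * P b s θ * ∑ a, π b s a * u a θ) - ∑ i, Fpay P μ γ i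

/-- Validity of a correlated mechanism (distributions and payment bounds). -/
def IsMech [∀ i, Fintype (B i)] [Fintype A] (M : ℝ)
    (μ : (∀ i, B i) → ℝ)
    (γ : Fin n → (∀ i, B i) → (∀ i, S i) → Θ → ℝ)
    (π : (∀ i, B i) → (∀ i, S i) → A → ℝ) : Prop :=
  (∀ b, 0 ≤ μ b) ∧ (∑ b, μ b) = 1 ∧
  (∀ i b s θ, γ i b s θ ∈ Set.Icc (0:ℝ) M) ∧
  (∀ b s a, 0 ≤ π b s a) ∧ (∀ b s, ∑ a, π b s a = 1)

/-- `f_i(x_i | b_i, b'_i, s_i, s'_i, ζ)`. -/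
def fLP [∀ i, Fintype (B i)] [∀ i, DecidableEq (B i)]
    [∀ i, Fintype (S i)] [∀ i, DecidableEq (S i)] [Fintype Θ]
    (i : Fin n) (x : (∀ j, B j) → (∀ j, S j) → Θ → ℝ)
    (bi bi' : B i) (si si' : S i)
    (ζ : (∀ j, B j) → (∀ j, S j) → Θ → ℝ) : ℝ :=
  ∑ b, ∑ s, ∑ θ,
    if b i = bi' ∧ s i = si then
      x (Function.update b i bi) (Function.update s i si') θ * ζ b s θ
    else 0

/-- Feasibility for `LP(ζ, Λ, ε)`. -/
def LPfeasible [∀ i, Fintype (B i)] [∀ i, DecidableEq (B i)]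
    [∀ i, Fintype (S i)] [∀ i, DecidableEq (S i)] [Fintype Θ] [Fintype A]
    (M : ℝ)
    (ζ : (∀ j, B j) → (∀ j, S j) → Θ → ℝ)
    (Λ : ∀ i, B i → B i → ℝ) (ε : ℝ)
    (x : Fin n → (∀ j, B j) → (∀ j, S j) → Θ → ℝ)
    (y : (∀ j, B j) → (∀ j, S j) → A → ℝ)
    (z : ∀ i, B i → B i → S i → ℝ)
    (μ : (∀ j, B j) → ℝ) : Prop :=
  (∀ i b s θ, 0 ≤ x i b s θ) ∧
  (∀ b s a, 0 ≤ y b s a) ∧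
  (∀ i (bi bi' : B i) si, 0 ≤ z i bi bi' si) ∧
  (∀ b, 0 ≤ μ b) ∧ (∑ b, μ b) = 1 ∧
  (∀ (i : Fin n) (bi bi' : B i),
    (∑ si, (fLP i (x i) bi bi si si ζ - z i bi bi' si)) ≥
      (∑ b, if b i = bi then μ b * Λ i bi bi' else 0) - ε) ∧
  (∀ (i : Fin n) (bi bi' : B i) (si si' : S i),
    z i bi bi' si ≥ fLP i (x i) bi bi' si si' ζ) ∧
  (∀ b s, (∑ a, y b s a) = μ b) ∧
  (∀ i b s θ, x i b s θ ≤ M * μ b)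

/-- Objective of `LP(ζ, Λ, ε)`. -/
def LPobj [∀ i, Fintype (B i)] [∀ i, Fintype (S i)] [Fintype Θ] [Fintype A]
    (u : A → Θ → ℝ)
    (ζ : (∀ j, B j) → (∀ j, S j) → Θ → ℝ)
    (x : Fin n → (∀ j, B j) → (∀ j, S j) → Θ → ℝ)
    (y : (∀ j, B j) → (∀ j, S j) → A → ℝ) : ℝ :=
  ∑ b, ∑ s, ∑ θ,
    ((∑ a, y b s a * ζ b s θ * u a θ) - ∑ i, x i b s θ * ζ b s θ)

/-- A (bundled) instance of the information-acquisition game. -/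
structure AcqGame where
  n : ℕ
  B : Fin n → Type
  S : Fin n → Type
  Θ : Type
  A : Type
  [fB : ∀ i, Fintype (B i)]
  [dB : ∀ i, DecidableEq (B i)]
  [fS : ∀ i, Fintype (S i)]
  [dS : ∀ i, DecidableEq (S i)]
  [fΘ : Fintype Θ]
  [fA : Fintype A]
  c : ∀ i, B i → ℝ
  p : Θ → ℝ
  P : (∀ i, B i) → (∀ i, S i) → Θ → ℝ
  /-- marginal distribution `P^{(i)}(s_i, θ | b_i)` of agent `i`'s signal and the state -/
  Pm : ∀ i, B i → S i → Θ → ℝ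
  u : A → Θ → ℝ
  M : ℝ
  hM : 0 < M
  hc : ∀ i bi, c i bi ∈ Set.Icc (0:ℝ) 1
  hu : ∀ a θ, u a θ ∈ Set.Icc (0:ℝ) 1
  hp0 : ∀ θ, 0 ≤ p θ
  hp1 : (∑ θ, p θ) = 1
  hP0 : ∀ b s θ, 0 ≤ P b s θ
  hPp : ∀ b θ, (∑ s, P b s θ) = p θ
  /-- agent `i`'s signal marginal depends only on her own action `b i` -/
  hPm : ∀ (i : Fin n) (b : ∀ j, B j) (si : S i) (θ : Θ),
    (∑ s, if s i = si then P b s θ else 0) = Pm i (b i) si θ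

attribute [instance] AcqGame.fB AcqGame.dB AcqGame.fS AcqGame.dS AcqGame.fΘ AcqGame.fA

/-- `(bi, φ)` is a best response of agent `i` to the uncorrelated scoring rule `γ`. -/
def AcqGame.IsBR (G : AcqGame) (i : Fin G.n) (γ : G.S i → G.Θ → ℝ)
    (bi : G.B i) (φ : G.S i → G.S i) : Prop :=
  ∀ (bi' : G.B i) (φ' : G.S i → G.S i),
    (∑ s, ∑ θ, G.Pm i bi s θ * γ (φ s) θ) - G.c i bi ≥
    (∑ s, ∑ θ, G.Pm i bi' s θ * γ (φ' s) θ) - G.c i bi'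

/-- Principal's expected utility of an uncorrelated mechanism `(γ, π)` when the agents
best respond with actions `b` and signal-reporting policies `φ`. -/
def AcqGame.Uunc (G : AcqGame) (γ : ∀ i, G.S i → G.Θ → ℝ)
    (π : (∀ i, G.S i) → G.A → ℝ)
    (b : ∀ i, G.B i) (φ : ∀ i, G.S i → G.S i) : ℝ :=
  ∑ s, ∑ θ, G.P b s θ *
    ((∑ a, π (fun i => φ i (s i)) a * G.u a θ) - ∑ i, γ i (φ i (s i)) θ)

/-!
Two agents receive signals whose exclusive or equals the state when agent `0` exerts effort, while
each signal alone is independent of the state whatever the actions are. An uncorrelated rule pays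
agent `0` on the basis of her own report and the state only, so effort cannot raise her payment;
she shirks, the signals are pure noise, and the principal guesses the state with utility at most
`1/2`. A correlated mechanism can pay agent `0` the amount `1/4` when the exclusive or of the *two*
reports is correct: effort then raises her expected payment from `1/8` to `1/4`, which covers its
cost `1/8`, and the principal nets `1 - 1/4`.
-/

section PureProfile

variable [∀ i, Fintype (B i)] [DecidableEq (∀ i, B i)]

theorem isMech_single_one [Fintype A] [DecidableEq A] {M : ℝ} (b₀ : ∀ i, B i)
    {γ : Fin n → (∀ i, B i) → (∀ i, S i) → Θ → ℝ}
    (hγ : ∀ i b s θ, γ i b s θ ∈ Set.Icc (0 : ℝ) M) (f : (∀ i, B i) → (∀ i, S i) → A) :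
    IsMech M (Pi.single b₀ 1) γ fun b s => Pi.single (f b s) 1 := by
  have hμ : (0 : (∀ i, B i) → ℝ) ≤ Pi.single b₀ 1 := Pi.single_nonneg.2 zero_le_one
  have hπ (a : A) : (0 : A → ℝ) ≤ Pi.single a 1 := Pi.single_nonneg.2 zero_le_one
  exact ⟨hμ, by simp, hγ, fun b s => hπ (f b s), by simp⟩

variable [∀ i, Fintype (S i)] [Fintype Θ]
  (P : (∀ i, B i) → (∀ i, S i) → Θ → ℝ) (b₀ : ∀ i, B i)
  (γ : Fin n → (∀ i, B i) → (∀ i, S i) → Θ → ℝ)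

theorem fpay_single_one (i : Fin n) :
    Fpay P (Pi.single b₀ 1) γ i = ∑ s, ∑ θ, P b₀ s θ * γ i b₀ s θ := by
  simp only [Fpay, mul_assoc, ← mul_sum]
  exact single_one_dotProduct b₀ _

theorem fpayDev_single_one (i : Fin n) (φ : B i → B i) (ψ : B i → S i → S i) :
    FpayDev P (Pi.single b₀ 1) γ i φ ψ =
      ∑ s, ∑ θ, P (Function.update b₀ i (φ (b₀ i))) s θ *
        γ i b₀ (Function.update s i (ψ (b₀ i) (s i))) θ := by
  simp only [FpayDev, mul_assoc, ← mul_sum]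
  exact single_one_dotProduct b₀ _

theorem ic_single_one_iff (c : ∀ i, B i → ℝ) :
    IC c P (Pi.single b₀ 1) γ ↔ ∀ (i : Fin n) (b' : B i) (ψ : S i → S i),
      c i (b₀ i) - c i b' ≤ (∑ s, ∑ θ, P b₀ s θ * γ i b₀ s θ) -
        ∑ s, ∑ θ, P (Function.update b₀ i b') s θ *
          γ i b₀ (Function.update s i (ψ (s i))) θ := by
  have expected_cost (i : Fin n) (φ : B i → B i) :
      ∑ b, (Pi.single b₀ 1 : _ → ℝ) b * (c i (b i) - c i (φ (b i))) =
        c i (b₀ i) - c i (φ (b₀ i)) :=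
    single_one_dotProduct b₀ _
  simp only [IC, fpay_single_one, fpayDev_single_one, expected_cost, ge_iff_le]
  exact ⟨fun h i b' ψ => h i (fun _ => b') fun _ => ψ, fun h i φ ψ => h i (φ (b₀ i)) (ψ (b₀ i))⟩

theorem util_single_one [Fintype A] [DecidableEq A] (u : A → Θ → ℝ)
    (f : (∀ i, B i) → (∀ i, S i) → A) :
    Util P u (Pi.single b₀ 1) γ (fun b s => Pi.single (f b s) 1) =
      (∑ s, ∑ θ, P b₀ s θ * u (f b₀ s) θ) - ∑ i, ∑ s, ∑ θ, P b₀ s θ * γ i b₀ s θ := by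
  have expected_utility (b : ∀ i, B i) (s : ∀ i, S i) (θ : Θ) :
      ∑ a, (Pi.single (f b s) 1 : A → ℝ) a * u a θ = u (f b s) θ :=
    single_one_dotProduct (f b s) fun a => u a θ
  simp only [Util, fpay_single_one, expected_utility, mul_assoc, ← mul_sum]
  exact congrArg (· - _) (single_one_dotProduct b₀ _)

end PureProfile

namespace AcqGame

variable {G : AcqGame}

theorem IsBR.cost_le_of_Pm_eq {i : Fin G.n} {γ : G.S i → G.Θ → ℝ} {bi bi' : G.B i}
    {φ : G.S i → G.S i} (h : G.IsBR i γ bi φ) (hPm : G.Pm i bi = G.Pm i bi') :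
    G.c i bi ≤ G.c i bi' := by
  have deviation := h bi' φ
  rw [hPm] at deviation
  linarith

theorem uunc_le_sum {γ : ∀ i, G.S i → G.Θ → ℝ} {π : (∀ i, G.S i) → G.A → ℝ}
    (hγ : ∀ i s θ, 0 ≤ γ i s θ) (hπ₀ : ∀ s a, 0 ≤ π s a) (hπ₁ : ∀ s, ∑ a, π s a = 1)
    (b : ∀ i, G.B i) (φ : ∀ i, G.S i → G.S i) {v : (∀ i, G.S i) → ℝ}
    (hv : ∀ s a, ∑ θ, G.P b s θ * G.u a θ ≤ v s) :
    G.Uunc γ π b φ ≤ ∑ s, v s := by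
  refine sum_le_sum fun s _ => ?_
  set r : ∀ i, G.S i := fun i => φ i (s i)
  calc ∑ θ, G.P b s θ * (∑ a, π r a * G.u a θ - ∑ i, γ i (r i) θ)
      ≤ ∑ θ, G.P b s θ * ∑ a, π r a * G.u a θ :=
        sum_le_sum fun θ _ => mul_le_mul_of_nonneg_left
          (sub_le_self _ (sum_nonneg fun i _ => hγ i (r i) θ)) (G.hP0 b s θ)
    _ = ∑ a, π r a * ∑ θ, G.P b s θ * G.u a θ := by
        simp only [mul_sum, mul_left_comm (G.P b s _)]
        exact sum_comm
    _ ≤ ∑ a, π r a * v s :=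
        sum_le_sum fun a _ => mul_le_mul_of_nonneg_left (hv s a) (hπ₀ r a)
    _ = v s := by rw [← sum_mul, hπ₁, one_mul]

end AcqGame

/-- The exclusive or of the signals of the two agents. -/
def parity (s : Fin 2 → Bool) : Bool := xor (s 0) (s 1)

theorem card_filter_parity_eq (θ : Bool) : #{s | parity s = θ} = 2 := by
  revert θ; decide

theorem card_filter_apply_eq (i : Fin 2) (si : Bool) : #{s : Fin 2 → Bool | s i = si} = 2 := by
  revert i si; decide

theorem card_filter_apply_eq_and_parity_eq (i : Fin 2) (si θ : Bool) :
    #{s | s i = si ∧ parity s = θ} = 1 := by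
  revert i si θ; decide

/-- The joint law of the signals and the state in the parity game. If agent `0` exerts effort, the
parity of two fair bits is the state; if she shirks, signals and state are independent fair bits.
The action of agent `1` is immaterial. -/
def parityLaw (b s : Fin 2 → Bool) (θ : Bool) : ℝ :=
  if b 0 then (if parity s = θ then 1 / 4 else 0) else 1 / 8

theorem sum_parityLaw (b : Fin 2 → Bool) (θ : Bool) : ∑ s, parityLaw b s θ = 1 / 2 := by
  cases hb : b 0
  · norm_num [parityLaw, hb]
  · norm_num [parityLaw, hb, ← sum_filter, card_filter_parity_eq]

theorem sum_ite_parityLaw (i : Fin 2) (b : Fin 2 → Bool) (si θ : Bool) :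
    (∑ s, if s i = si then parityLaw b s θ else 0) = 1 / 4 := by
  cases hb : b 0
  · norm_num [parityLaw, hb, ← sum_filter, card_filter_apply_eq]
  · norm_num [parityLaw, hb, ← ite_and, ← sum_filter, card_filter_apply_eq_and_parity_eq]

theorem sum_parityLaw_mul_of_effort {b : Fin 2 → Bool} (hb : b 0 = true)
    (g : (Fin 2 → Bool) → Bool → ℝ) :
    ∑ s, ∑ θ, parityLaw b s θ * g s θ = 1 / 4 * ∑ s, g s (parity s) := by
  simp only [parityLaw, hb, if_true, ite_mul, zero_mul, sum_ite_eq, mem_univ, mul_sum]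

theorem sum_parityLaw_mul_of_shirk {b : Fin 2 → Bool} (hb : b 0 = false)
    (g : (Fin 2 → Bool) → Bool → ℝ) :
    ∑ s, ∑ θ, parityLaw b s θ * g s θ = 1 / 8 * ∑ s, ∑ θ, g s θ := by
  simp only [parityLaw, hb, Bool.false_eq_true, if_false, mul_sum]

/-- Effort (`true`) costs agent `0` the amount `1/8`; all other actions are free. -/
def effortCost (i : Fin 2) (b : Bool) : ℝ := if i = 0 ∧ b then 1 / 8 else 0

/-- The principal's utility from guessing `a` when the state is `θ`. -/
def guessUtility (a θ : Bool) : ℝ := if a = θ then 1 else 0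

/-- The game in which the principal guesses a fair bit `θ` from two signals distributed according
to `parityLaw`, agent `0` bearing `effortCost`. -/
def parityGame : AcqGame where
  n := 2
  B _ := Bool
  S _ := Bool
  Θ := Bool
  A := Bool
  c := effortCost
  p _ := 1 / 2
  P := parityLaw
  Pm _ _ _ _ := 1 / 4
  u := guessUtility
  M := 1
  hM := one_pos
  hc i b := by unfold effortCost; split_ifs <;> norm_num
  hu a θ := by unfold guessUtility; split_ifs <;> norm_num
  hp0 _ := by norm_num
  hp1 := by norm_num
  hP0 b s θ := by unfold parityLaw; split_ifs <;> norm_num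
  hPp := sum_parityLaw
  hPm := sum_ite_parityLaw

/-- The payment rule giving `1/4` to agent `0` exactly when the parity of the two reports is the
state, and nothing to agent `1`. -/
def parityPay (i : Fin 2) (_ s : Fin 2 → Bool) (θ : Bool) : ℝ :=
  if i = 0 ∧ parity s = θ then 1 / 4 else 0

theorem parityPay_mem_Icc (i : Fin 2) (b s : Fin 2 → Bool) (θ : Bool) :
    parityPay i b s θ ∈ Set.Icc (0 : ℝ) (1 / 4) := by
  unfold parityPay; split_ifs <;> norm_num

theorem parityPay_one (b s : Fin 2 → Bool) (θ : Bool) : parityPay 1 b s θ = 0 := by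
  simp only [parityPay, one_ne_zero, false_and, if_false]

theorem sum_parityLaw_mul_parityPay_zero_of_effort {b : Fin 2 → Bool} (hb : b 0 = true)
    (b' : Fin 2 → Bool) :
    ∑ s, ∑ θ, parityLaw b s θ * parityPay 0 b' s θ = 1 / 4 := by
  rw [sum_parityLaw_mul_of_effort hb]
  norm_num [parityPay]

theorem sum_parityLaw_mul_parityPay_le_of_effort {b : Fin 2 → Bool} (hb : b 0 = true) (i : Fin 2)
    (b' : Fin 2 → Bool) (r : (Fin 2 → Bool) → Fin 2 → Bool) :
    ∑ s, ∑ θ, parityLaw b s θ * parityPay i b' (r s) θ ≤ 1 / 4 := by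
  have total_le : ∑ s, parityPay i b' (r s) (parity s) ≤ 1 :=
    calc ∑ s, parityPay i b' (r s) (parity s)
        ≤ ∑ _s : Fin 2 → Bool, (1 / 4 : ℝ) :=
          sum_le_sum fun s _ => (parityPay_mem_Icc i b' (r s) (parity s)).2
      _ = 1 := by norm_num
  rw [sum_parityLaw_mul_of_effort hb]
  linarith

theorem sum_parityLaw_mul_parityPay_zero_of_shirk {b : Fin 2 → Bool} (hb : b 0 = false)
    (b' : Fin 2 → Bool) (r : (Fin 2 → Bool) → Fin 2 → Bool) :
    ∑ s, ∑ θ, parityLaw b s θ * parityPay 0 b' (r s) θ = 1 / 8 := by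
  rw [sum_parityLaw_mul_of_shirk hb]
  norm_num [parityPay]

theorem ic_parityPay {b₀ : Fin 2 → Bool} (hb₀ : b₀ 0 = true) :
    IC effortCost parityLaw (Pi.single b₀ 1) parityPay := by
  refine (ic_single_one_iff parityLaw b₀ parityPay effortCost).2 (Fin.forall_fin_two.2 ⟨?_, ?_⟩)
  · intro b' ψ
    rw [sum_parityLaw_mul_parityPay_zero_of_effort hb₀, hb₀]
    have hb' : Function.update b₀ 0 b' 0 = b' := Function.update_self 0 b' b₀
    cases b'
    · rw [sum_parityLaw_mul_parityPay_zero_of_shirk hb']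
      norm_num [effortCost]
    · have pay_le := sum_parityLaw_mul_parityPay_le_of_effort hb' 0 b₀
        fun s => Function.update s 0 (ψ (s 0))
      rw [sub_self]
      exact sub_nonneg.2 pay_le
  · intro b' ψ
    simp [effortCost, parityPay_one]

theorem util_parityPay {b₀ : Fin 2 → Bool} (hb₀ : b₀ 0 = true) :
    Util parityLaw guessUtility (Pi.single b₀ 1) parityPay (fun _ s => Pi.single (parity s) 1)
      = 3 / 4 := by
  have value : ∑ s, ∑ θ, parityLaw b₀ s θ * guessUtility (parity s) θ = 1 := by
    rw [sum_parityLaw_mul_of_effort hb₀]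
    norm_num [guessUtility]
  have payment : ∑ i, ∑ s, ∑ θ, parityLaw b₀ s θ * parityPay i b₀ s θ = 1 / 4 := by
    simp only [Fin.sum_univ_two, sum_parityLaw_mul_parityPay_zero_of_effort hb₀, parityPay_one,
      mul_zero, sum_const_zero, add_zero]
  refine (util_single_one parityLaw b₀ parityPay guessUtility fun _ s => parity s).trans ?_
  rw [value, payment]
  norm_num

theorem parityGame_eq_false_of_isBR {γ : Bool → Bool → ℝ} {b : Bool} {φ : Bool → Bool}
    (h : parityGame.IsBR (0 : Fin 2) γ b φ) : b = false := by
  have same_law : parityGame.Pm (0 : Fin 2) b = parityGame.Pm (0 : Fin 2) (false : Bool) := rfl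
  have cost_le : effortCost 0 b ≤ effortCost 0 false := h.cost_le_of_Pm_eq same_law
  cases b
  · rfl
  · norm_num [effortCost] at cost_le

theorem sum_parityLaw_mul_guessUtility_of_shirk {b : Fin 2 → Bool} (hb : b 0 = false)
    (s : Fin 2 → Bool) (a : Bool) : ∑ θ, parityLaw b s θ * guessUtility a θ = 1 / 8 := by
  simp [parityLaw, hb, guessUtility]

theorem parityGame_uunc_le_of_shirk
    {γ : Fin 2 → Bool → Bool → ℝ} {π : (Fin 2 → Bool) → Bool → ℝ}
    (hγ : ∀ i s θ, 0 ≤ γ i s θ) (hπ₀ : ∀ s a, 0 ≤ π s a) (hπ₁ : ∀ s, ∑ a, π s a = 1)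
    {b : Fin 2 → Bool} (hb : b 0 = false) (φ : Fin 2 → Bool → Bool) :
    parityGame.Uunc γ π b φ ≤ 1 / 2 :=
  calc parityGame.Uunc γ π b φ
      ≤ ∑ _s : Fin 2 → Bool, (1 / 8 : ℝ) := AcqGame.uunc_le_sum (G := parityGame) hγ hπ₀ hπ₁ b φ
        fun s a => (sum_parityLaw_mul_guessUtility_of_shirk hb s a).le
    _ = 1 / 2 := by norm_num

/-- there exists a game in which no uncorrelated mechanism is optimal. -/
theorem exists_game_where_no_uncorrelated_mechanism_is_optimal :
    ∃ G : AcqGame,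
      ∀ (γ : ∀ i, G.S i → G.Θ → ℝ) (π : (∀ i, G.S i) → G.A → ℝ),
        (∀ i s θ, γ i s θ ∈ Set.Icc (0:ℝ) G.M) →
        (∀ s a, 0 ≤ π s a) → (∀ s, (∑ a, π s a) = 1) →
        ∀ (b : ∀ i, G.B i) (φ : ∀ i, G.S i → G.S i),
          (∀ i, G.IsBR i (γ i) (b i) (φ i)) →
          ∃ (μ' : (∀ i, G.B i) → ℝ)
            (γ' : Fin G.n → (∀ i, G.B i) → (∀ i, G.S i) → G.Θ → ℝ)
            (π' : (∀ i, G.B i) → (∀ i, G.S i) → G.A → ℝ),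
            IsMech G.M μ' γ' π' ∧ IC G.c G.P μ' γ' ∧
              G.Uunc γ π b φ < Util G.P G.u μ' γ' π' := by
  refine ⟨parityGame, fun γ π hγ hπ₀ hπ₁ b φ hBR => ?_⟩
  have shirk : b (0 : Fin 2) = false := parityGame_eq_false_of_isBR (hBR (0 : Fin 2))
  have uunc_le : parityGame.Uunc γ π b φ ≤ 1 / 2 :=
    parityGame_uunc_le_of_shirk (fun i s θ => (hγ i s θ).1) hπ₀ hπ₁ shirk φ
  have pay_mem (i : Fin 2) (b s : Fin 2 → Bool) (θ : Bool) :
      parityPay i b s θ ∈ Set.Icc (0 : ℝ) 1 :=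
    Set.Icc_subset_Icc_right (by norm_num) (parityPay_mem_Icc i b s θ)
  have effort : (fun _ : Fin 2 => true) 0 = true := rfl
  refine ⟨_, _, _, isMech_single_one (fun _ => true) pay_mem fun _ s => parity s,
    ic_parityPay effort, ?_⟩
  exact (uunc_le.trans_lt (by norm_num)).trans_eq (util_parityPay effort).symm
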